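/- arXiv:1203.6648 — 2 statements merged into one kernel-verified Lean document; each statement's English description precedes it below -/
import Mathlib

section
/- Let p be an odd prime dividing the odd square-free positive integer d, and let S = diag(1,...,1,-d) be an (n+1)×(n+1) matrix. Then the number E_{p²}(S) of matrices M over ℤ/p² with Mᵀ S M = S equals 2 · p^{(n+1)(n+2)/2} · |O(n, ℤ/p)|, where O(n, ℤ/p) is the group of n×n matrices A over ℤ/p with Aᵀ A = I. -/
open Matrix

/-!
Let `π : R → k` be a surjective ring homomorphism whose kernel is generated by an element `ϖ` with
annihilator `ker π`, as for `ℤ/p² → ℤ/p` and `ϖ = -d`. Then `ϖ² = 0`, so that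
`(A + ϖX)ᵀ T (A + ϖX) = AᵀTA + ϖ(AᵀTX + (AᵀTX)ᵀ)`. Hence lifting a solution of `AᵀTA = T'`, with
`T'` invertible, from `k` to `R` amounts to solving `W + Wᵀ = B` over `k` with `B` symmetric, which
can be done in `|k| ^ (n choose 2)` ways when `2` is invertible.

For `S = T ⊕ ϖU` and `M` with blocks `A, b, c, e`, the equation `MᵀSM = S` says that `c` is
arbitrary, that `AᵀTA = T - ϖcᵀUc`, that `eᵀUe = U` modulo `ϖ`, and that `b = -ϖ(AᵀT)⁻¹cᵀUe` is
determined by the other blocks. Here `T = 1` and `U = 1` has size one, so that `e` reduces to `1`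
or `-1`.
-/

section Counting

theorem card_subtype_eq_mul_of_card_fiber {α β : Type*} [Finite α] [Finite β] {p : α → Prop}
    {q : β → Prop} {f : α → β} {c : ℕ} (hf : ∀ a, p a → q (f a))
    (hc : ∀ b, q b → Nat.card {a // f a = b ∧ p a} = c) :
    Nat.card {a // p a} = c * Nat.card {b // q b} := by
  have := Fintype.ofFinite {b // q b}
  have hfiber (b : {b // q b}) : Nat.card {a // Subtype.map f hf a = b} = c := by
    rw [← hc b b.2]
    refine Nat.card_congr <| (Equiv.subtypeEquivRight fun a => Subtype.ext_iff).trans <|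
      (Equiv.subtypeSubtypeEquivSubtypeInter p (f · = b)).trans <|
        Equiv.subtypeEquivRight fun a => and_comm
  rw [← Nat.card_congr (Equiv.sigmaFiberEquiv (Subtype.map f hf)), Nat.card_sigma]
  simp only [hfiber, Finset.sum_const, Finset.card_univ, smul_eq_mul, mul_comm c,
    Nat.card_eq_fintype_card]

theorem mul_self_eq_choose_two_add (n : ℕ) : n * n = (n + 1).choose 2 + n.choose 2 := by
  induction n with
  | zero => rfl
  | succ n ih =>
    simp only [Nat.choose_succ_succ' _ 1, Nat.choose_one_right] at ih ⊢
    linarith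

theorem choose_two_add_two_mul_add_one (n : ℕ) :
    n.choose 2 + 2 * n + 1 = (n + 1) * (n + 2) / 2 :=
  calc
    n.choose 2 + 2 * n + 1 = (n + 2).choose 2 := by
      simp only [Nat.choose_succ_succ' _ 1, Nat.choose_one_right]
      ring
    _ = (n + 1) * (n + 2) / 2 := by rw [Nat.choose_two_right, mul_comm]; rfl

variable {n R : Type*} [Fintype n]

theorem card_matrix {m : Type*} [Fintype m] :
    Nat.card (Matrix m n R) = Nat.card R ^ (Fintype.card m * Fintype.card n) := by
  rw [show Matrix m n R = (m → n → R) from rfl, Nat.card_fun, Nat.card_fun, ← pow_mul, mul_comm,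
    Nat.card_eq_fintype_card (α := m), Nat.card_eq_fintype_card (α := n)]

theorem card_isSymm : Nat.card {B : Matrix n n R // B.IsSymm} =
    Nat.card R ^ (Fintype.card n + 1).choose 2 := by
  let e : {B : Matrix n n R // B.IsSymm} ≃ (Sym2 n → R) :=
    (Equiv.subtypeEquivRight fun B => IsSymm.ext_iff.trans forall_comm).trans Sym2.lift
  rw [Nat.card_congr e, Nat.card_fun, Sym2.natCard, Nat.card_eq_fintype_card (α := n)]

variable [Ring R] [Invertible (2 : R)]

/-- The decomposition of a square matrix into its symmetric part and a remainder, normalised so that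
the remainder solves `W + Wᵀ = B`. -/
def symmProdEquiv {B : Matrix n n R} (hB : B.IsSymm) :
    Matrix n n R ≃ {S : Matrix n n R // S.IsSymm} × {W : Matrix n n R // W + Wᵀ = B} where
  toFun M := (⟨M + Mᵀ, isSymm_add_transpose_self M⟩, ⟨M + (⅟2 : R) • (B - (M + Mᵀ)), by
    have hhalf := invOf_two_smul_add_invOf_two_smul R (B - (M + Mᵀ))
    rw [transpose_add, (hB.sub (isSymm_add_transpose_self M)).smul _, add_add_add_comm, hhalf,
      add_sub_cancel]⟩)
  invFun x := x.2.1 + (⅟2 : R) • (x.1.1 - B)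
  left_inv M := by
    simp only [← neg_sub B, smul_neg, add_neg_cancel_right]
  right_inv x := by
    obtain ⟨⟨S, hS⟩, W, hW⟩ := x
    have hhalf := invOf_two_smul_add_invOf_two_smul R (S - B)
    have hsum : W + (⅟2 : R) • (S - B) + (W + (⅟2 : R) • (S - B))ᵀ = S := by
      rw [transpose_add, (hS.sub hB).smul _, add_add_add_comm, hhalf, hW, add_sub_cancel]
    ext : 2
    · exact hsum
    · change W + _ + (⅟2 : R) • (B - (W + _ + (W + _)ᵀ)) = W
      rw [hsum, ← neg_sub S, smul_neg, add_neg_cancel_right]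

theorem card_add_transpose_eq [Finite R] {B : Matrix n n R} (hB : B.IsSymm) :
    Nat.card {W : Matrix n n R // W + Wᵀ = B} = Nat.card R ^ (Fintype.card n).choose 2 := by
  have hprod := Nat.card_congr (symmProdEquiv hB)
  rw [Nat.card_prod, card_isSymm, card_matrix, mul_self_eq_choose_two_add, pow_add] at hprod
  exact (Nat.eq_of_mul_eq_mul_left (pow_pos Nat.card_pos _) hprod).symm

end Counting

/-- The matrices `A` with `Aᵀ S A = T`, that is, the isometries from the bilinear form with Gram
matrix `T` to the one with Gram matrix `S`. Over `ℤ/q` the type `FormIsometry S S` has `E_q(S)`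
elements. -/
abbrev FormIsometry {n R : Type*} [Fintype n] [CommRing R] (S T : Matrix n n R) : Type _ :=
  {A : Matrix n n R // Aᵀ * S * A = T}

theorem isSymm_transpose_mul_mul {m n R : Type*} [Fintype m] [CommRing R] {T : Matrix m m R}
    (hT : T.IsSymm) (A : Matrix m n R) : (Aᵀ * T * A).IsSymm := by
  rw [IsSymm, transpose_mul, transpose_mul, transpose_transpose, hT.eq, Matrix.mul_assoc]

theorem card_formIsometry_submatrix {m n R : Type*} [Fintype m] [Fintype n] [CommRing R]
    (e : m ≃ n) (S T : Matrix n n R) :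
    Nat.card (FormIsometry (S.submatrix e e) (T.submatrix e e)) = Nat.card (FormIsometry S T) := by
  refine Nat.card_congr (Equiv.subtypeEquiv (reindex e.symm e.symm) fun A => ?_).symm
  simp only [reindex_apply, Equiv.symm_symm, transpose_submatrix, submatrix_mul_equiv]
  exact ((reindex e.symm e.symm).injective.eq_iff).symm

theorem card_formIsometry_one_of_unique {n R : Type*} [Fintype n] [DecidableEq n] [Unique n]
    [CommRing R] :
    Nat.card (FormIsometry (1 : Matrix n n R) 1) = Nat.card {x : R // x * x = 1} :=
  Nat.card_congr <| Equiv.subtypeEquiv uniqueEquiv fun A => by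
    simp only [← Matrix.ext_iff, Unique.forall_iff, Matrix.mul_apply, Matrix.mul_one,
      transpose_apply, Fintype.sum_unique, one_apply_eq, uniqueEquiv_apply]

theorem card_mul_self_eq_one {R : Type*} [CommRing R] [IsDomain R] [Invertible (2 : R)] :
    Nat.card {x : R // x * x = 1} = 2 := by
  have hne : (1 : R) ≠ -1 := fun h => Invertible.ne_zero (2 : R) (by linear_combination h)
  have hpm (x : R) : x * x = 1 ↔ x ∈ ({1, -1} : Set R) := mul_self_eq_one_iff
  rw [Nat.card_congr (Equiv.subtypeEquivRight hpm), Nat.card_coe_set_eq, Set.ncard_pair hne]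

theorem diagonal_ite_last_eq_submatrix {R : Type*} [CommRing R] (n : ℕ) (a : R) :
    diagonal (fun i : Fin (n + 1) => if (i : ℕ) = n then a else 1) =
      (fromBlocks 1 0 0 (a • 1)).submatrix (finSumFinEquiv (m := n) (n := 1)).symm
        finSumFinEquiv.symm := by
  have hblocks : fromBlocks (1 : Matrix (Fin n) (Fin n) R) 0 0 (a • 1 : Matrix (Fin 1) (Fin 1) R) =
      diagonal (Sum.elim 1 fun _ => a) := by
    rw [smul_one_eq_diagonal, ← diagonal_one, fromBlocks_diagonal]
    rfl
  rw [hblocks, submatrix_diagonal_equiv]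
  congr 1
  ext i
  refine Fin.lastCases ?_ (fun i => ?_) i
  · simp
  · simp [i.2.ne]

/-- A surjection `π : R → k` whose kernel is generated by `ϖ` and free of rank one over `k`, so that
`0 → k → R → k → 0` is exact, where the first map sends `π r` to `ϖ * r`. -/
structure IsFirstOrderThickening {R k : Type*} [CommRing R] [CommRing k] (π : R →+* k) (ϖ : R) :
    Prop where
  surjective : Function.Surjective π
  dvd_iff : ∀ r, ϖ ∣ r ↔ π r = 0
  mul_eq_zero_iff : ∀ r, ϖ * r = 0 ↔ π r = 0

namespace IsFirstOrderThickening

variable {R k m n : Type*} [CommRing R] [CommRing k] {π : R →+* k} {ϖ : R}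

theorem mul_unit (h : IsFirstOrderThickening π ϖ) {u : R} (hu : IsUnit u) :
    IsFirstOrderThickening π (ϖ * u) where
  surjective := h.surjective
  dvd_iff r := hu.mul_right_dvd.trans (h.dvd_iff r)
  mul_eq_zero_iff r := by rw [mul_right_comm, hu.mul_left_eq_zero, h.mul_eq_zero_iff]

theorem zmod_sq (m : ℕ) [NeZero m] :
    IsFirstOrderThickening (ZMod.castHom (dvd_pow_self m two_ne_zero) (ZMod m))
      (m : ZMod (m ^ 2)) where
  surjective := ZMod.castHom_surjective _
  dvd_iff r := by
    refine ⟨?_, fun hr => ?_⟩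
    · rintro ⟨s, rfl⟩
      rw [map_mul, map_natCast, ZMod.natCast_self, zero_mul]
    obtain ⟨a, rfl⟩ := ZMod.natCast_zmod_surjective r
    rw [map_natCast, ZMod.natCast_eq_zero_iff] at hr
    exact Nat.cast_dvd_cast hr
  mul_eq_zero_iff r := by
    obtain ⟨a, rfl⟩ := ZMod.natCast_zmod_surjective r
    rw [map_natCast, ← Nat.cast_mul, ZMod.natCast_eq_zero_iff, ZMod.natCast_eq_zero_iff, sq,
      Nat.mul_dvd_mul_iff_left (NeZero.pos m)]

theorem zmod_sq_neg_of_squarefree {m d : ℕ} (hd : Squarefree d) (hmd : m ∣ d) :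
    IsFirstOrderThickening (ZMod.castHom (dvd_pow_self m two_ne_zero) (ZMod m))
      (-(d : ZMod (m ^ 2))) := by
  obtain ⟨u, rfl⟩ := hmd
  have : NeZero m := ⟨left_ne_zero_of_mul hd.ne_zero⟩
  have hu : IsUnit (u : ZMod (m ^ 2)) :=
    (ZMod.isUnit_iff_coprime u (m ^ 2)).2 ((Nat.coprime_of_squarefree_mul hd).symm.pow_right 2)
  simpa only [Nat.cast_mul, mul_neg] using (zmod_sq m).mul_unit hu.neg

variable (h : IsFirstOrderThickening π ϖ)
include h

theorem map_eq_zero : π ϖ = 0 := (h.dvd_iff ϖ).1 dvd_rfl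

theorem mul_self : ϖ * ϖ = 0 := (h.mul_eq_zero_iff ϖ).2 h.map_eq_zero

theorem isLocalHom : IsLocalHom π where
  map_nonunit r hr := by
    obtain ⟨s, hs⟩ := h.surjective ↑(hr.unit⁻¹)
    obtain ⟨t, ht⟩ := (h.dvd_iff (r * s - 1)).2 (by simp [hs])
    refine IsUnit.of_mul_eq_one (s * (1 - ϖ * t)) ?_
    linear_combination (1 - ϖ * t) * ht - t ^ 2 * h.mul_self

theorem isUnit_of_map_matrix [Fintype n] [DecidableEq n] {A : Matrix n n R}
    (hA : IsUnit (A.map π)) : IsUnit A := by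
  have := h.isLocalHom
  rw [isUnit_iff_isUnit_det] at hA ⊢
  exact isUnit_of_map_unit π _ (by rwa [RingHom.map_det])

theorem map_smul_matrix (A : Matrix m n R) : (ϖ • A).map π = 0 := by
  ext i j; simp [h.map_eq_zero]

theorem map_sub_smul_matrix (A X : Matrix m n R) : (A - ϖ • X).map π = A.map π := by
  rw [Matrix.map_sub _ (map_sub π), h.map_smul_matrix, sub_zero]

theorem smul_matrix_eq_zero_iff {A : Matrix m n R} : ϖ • A = 0 ↔ A.map π = 0 := by
  simp only [← Matrix.ext_iff, Matrix.smul_apply, smul_eq_mul, h.mul_eq_zero_iff, map_apply,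
    Matrix.zero_apply]

theorem smul_matrix_inj {A B : Matrix m n R} : ϖ • A = ϖ • B ↔ A.map π = B.map π := by
  rw [← sub_eq_zero, ← smul_sub, h.smul_matrix_eq_zero_iff, Matrix.map_sub _ (map_sub π),
    sub_eq_zero]

theorem exists_eq_add_smul_matrix {A B : Matrix m n R} (hAB : A.map π = B.map π) :
    ∃ X, A = B + ϖ • X := by
  have hdvd (i j) : ϖ ∣ A i j - B i j := by
    rw [h.dvd_iff, map_sub, sub_eq_zero]; exact congr_fun₂ hAB i j
  choose X hX using hdvd
  exact ⟨of X, by ext i j; simp [← hX]⟩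

theorem map_matrix_surjective : Function.Surjective fun A : Matrix m n R => A.map π :=
  fun B => ⟨B.map (Function.surjInv h.surjective), by ext; simp [Function.surjInv_eq]⟩

/-- The fibre of the reduction map through `A`, parametrised by `X.map π ↦ A + ϖ • X`. -/
noncomputable def fiberEquiv (A : Matrix m n R) :
    Matrix m n k ≃ {B : Matrix m n R // B.map π = A.map π} :=
  Equiv.ofBijective
    (fun X => ⟨A + ϖ • Function.surjInv h.map_matrix_surjective X, by
      rw [Matrix.map_add _ (map_add π), h.map_smul_matrix, add_zero]⟩) <| by
    have hlift (X : Matrix m n k) := Function.surjInv_eq h.map_matrix_surjective X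
    refine ⟨fun X Y hXY => ?_, fun ⟨B, hB⟩ => ?_⟩
    · have := h.smul_matrix_inj.1 (add_left_cancel (congrArg Subtype.val hXY))
      exact (hlift X).symm.trans (this.trans (hlift Y))
    · obtain ⟨X, rfl⟩ := h.exists_eq_add_smul_matrix hB
      exact ⟨X.map π, Subtype.ext <| congrArg (A + ·) <| h.smul_matrix_inj.2 (hlift _)⟩

theorem coe_fiberEquiv_map (A X : Matrix m n R) : (h.fiberEquiv A (X.map π) : Matrix m n R) =
    A + ϖ • X :=
  congrArg (A + ·) <| h.smul_matrix_inj.2 (Function.surjInv_eq h.map_matrix_surjective _)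

theorem transpose_mul_mul_add_smul [Fintype n] {T : Matrix n n R} (hT : T.IsSymm)
    (A X : Matrix n n R) :
    (A + ϖ • X)ᵀ * T * (A + ϖ • X) = Aᵀ * T * A + ϖ • (Aᵀ * T * X + (Aᵀ * T * X)ᵀ) := by
  simp only [transpose_add, transpose_smul, Matrix.add_mul, Matrix.mul_add, Matrix.smul_mul,
    Matrix.mul_smul, smul_smul, h.mul_self, zero_smul, smul_add, transpose_mul,
    transpose_transpose, hT.eq, Matrix.mul_assoc]
  abel

theorem transpose_mul_mul_add_smul_eq_iff [Fintype n] {T : Matrix n n R} (hT : T.IsSymm)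
    (A X Z : Matrix n n R) :
    (A + ϖ • X)ᵀ * T * (A + ϖ • X) = Aᵀ * T * A + ϖ • Z ↔
      ((A.map π)ᵀ * T.map π) * X.map π + (((A.map π)ᵀ * T.map π) * X.map π)ᵀ = Z.map π := by
  rw [h.transpose_mul_mul_add_smul hT, add_right_inj, h.smul_matrix_inj,
    Matrix.map_add _ (map_add π), transpose_map, Matrix.map_mul, Matrix.map_mul, transpose_map]

section Counting

variable [Finite R]

theorem card_subtype_map_matrix [Fintype m] [Fintype n] (P : Matrix m n k → Prop) :
    Nat.card {A : Matrix m n R // P (A.map π)} =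
      Nat.card k ^ (Fintype.card m * Fintype.card n) * Nat.card {A : Matrix m n k // P A} := by
  have := Finite.of_surjective π h.surjective
  refine card_subtype_eq_mul_of_card_fiber (fun _ hA => hA) fun B hB => ?_
  obtain ⟨A, rfl⟩ := h.map_matrix_surjective B
  have hP (C : Matrix m n R) : C.map π = A.map π ∧ P (C.map π) ↔ C.map π = A.map π :=
    and_iff_left_of_imp fun hC => hC ▸ hB
  rw [Nat.card_congr ((Equiv.subtypeEquivRight hP).trans (h.fiberEquiv A).symm), card_matrix]

theorem card_matrix_eq [Fintype m] [Fintype n] :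
    Nat.card (Matrix m n R) = Nat.card k ^ (2 * (Fintype.card m * Fintype.card n)) := by
  have hcard := h.card_subtype_map_matrix fun _ : Matrix m n k => True
  rwa [Nat.card_congr (Equiv.subtypeUnivEquiv fun _ => trivial),
    Nat.card_congr (Equiv.subtypeUnivEquiv fun _ => trivial), card_matrix (R := k), ← pow_add,
    ← two_mul] at hcard

variable [Fintype n] [DecidableEq n]

theorem card_formIsometry_fiber [Invertible (2 : k)] {T T' : Matrix n n R}
    (hT : T.IsSymm) (hT' : T'.IsSymm) (hunit : IsUnit (T'.map π)) {A : Matrix n n R}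
    (hA : (A.map π)ᵀ * T.map π * A.map π = T'.map π) :
    Nat.card {B : Matrix n n R // B.map π = A.map π ∧ Bᵀ * T * B = T'} =
      Nat.card k ^ (Fintype.card n).choose 2 := by
  have := Finite.of_surjective π h.surjective
  obtain ⟨Z, rfl⟩ : ∃ Z, T' = Aᵀ * T * A + ϖ • Z :=
    h.exists_eq_add_smul_matrix (by rw [← hA, Matrix.map_mul, Matrix.map_mul, transpose_map])
  have hZ : (Z.map π).IsSymm := by
    rw [IsSymm, ← transpose_map, ← h.smul_matrix_inj, ← transpose_smul]
    exact (by simpa using hT'.sub (isSymm_transpose_mul_mul hT A) : (ϖ • Z).IsSymm).eq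
  obtain ⟨C, hC⟩ : IsUnit ((A.map π)ᵀ * T.map π) := isUnit_of_mul_isUnit_left (hA ▸ hunit)
  have hlift (X : Matrix n n k) : C.mulLeft X + (C.mulLeft X)ᵀ = Z.map π ↔
      (h.fiberEquiv A X : Matrix n n R)ᵀ * T * (h.fiberEquiv A X) = Aᵀ * T * A + ϖ • Z := by
    obtain ⟨X, rfl⟩ := h.map_matrix_surjective X
    rw [h.coe_fiberEquiv_map, h.transpose_mul_mul_add_smul_eq_iff hT, Units.mulLeft_apply, hC]
  rw [← card_add_transpose_eq hZ]
  exact Nat.card_congr <| ((Equiv.subtypeSubtypeEquivSubtypeInter _ _).symm.trans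
    ((h.fiberEquiv A).subtypeEquiv hlift).symm).trans
      (C.mulLeft.subtypeEquiv fun _ => Iff.rfl)

theorem card_formIsometry_eq_mul [Invertible (2 : k)] {T T' : Matrix n n R}
    (hT : T.IsSymm) (hT' : T'.IsSymm) (hunit : IsUnit (T'.map π)) :
    Nat.card (FormIsometry T T') = Nat.card k ^ (Fintype.card n).choose 2 *
      Nat.card (FormIsometry (T.map π) (T'.map π)) := by
  have := Finite.of_surjective π h.surjective
  refine card_subtype_eq_mul_of_card_fiber (f := fun A => A.map π) (fun A hA => ?_) fun B hB => ?_
  · rw [← hA, Matrix.map_mul, Matrix.map_mul, transpose_map]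
  · obtain ⟨A, rfl⟩ := h.map_matrix_surjective B
    exact h.card_formIsometry_fiber hT hT' hunit hB

end Counting

section Blocks

variable [Fintype m] [Fintype n] [DecidableEq m] {T A : Matrix m m R} {U e : Matrix n n R}
  {b : Matrix m n R} {c : Matrix n m R}

theorem transpose_fromBlocks_mul_mul_eq_iff (hT : T.IsSymm) (hU : U.IsSymm)
    (hunit : IsUnit (T.map π)) :
    (fromBlocks A b c e)ᵀ * fromBlocks T 0 0 (ϖ • U) * fromBlocks A b c e =
        fromBlocks T 0 0 (ϖ • U) ↔
      Aᵀ * T * A = T - ϖ • (cᵀ * U * c) ∧ b = -(ϖ • ((Aᵀ * T)⁻¹ * (cᵀ * U * e))) ∧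
        (e.map π)ᵀ * U.map π * e.map π = U.map π := by
  have hsymm : bᵀ * T * A + ϖ • (eᵀ * U * c) = 0 ↔ Aᵀ * T * b + ϖ • (cᵀ * U * e) = 0 := by
    rw [← transpose_inj]
    simp only [transpose_add, transpose_smul, transpose_mul, transpose_transpose, hT.eq, hU.eq,
      transpose_zero, Matrix.mul_assoc]
  have hquad (Y : Matrix m n R) (hb : b = -(ϖ • Y)) : bᵀ * T * b = 0 := by
    simp only [hb, transpose_neg, transpose_smul, Matrix.neg_mul, Matrix.mul_neg, Matrix.smul_mul,
      Matrix.mul_smul, smul_neg, smul_smul, h.mul_self, zero_smul, neg_zero]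
  have he : ϖ • (eᵀ * U * e) = ϖ • U ↔ (e.map π)ᵀ * U.map π * e.map π = U.map π := by
    rw [h.smul_matrix_inj, Matrix.map_mul, Matrix.map_mul, transpose_map]
  rw [fromBlocks_transpose, fromBlocks_multiply, fromBlocks_multiply, fromBlocks_inj]
  simp only [Matrix.mul_zero, add_zero, zero_add, Matrix.mul_smul, Matrix.smul_mul, hsymm,
    and_self_left, ← he]
  rw [← eq_sub_iff_add_eq]
  refine and_congr_right fun hA => ?_
  have hC : IsUnit (Aᵀ * T).det := by
    rw [← isUnit_iff_isUnit_det]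
    refine isUnit_of_mul_isUnit_left (y := A) (h.isUnit_of_map_matrix ?_)
    rwa [hA, h.map_sub_smul_matrix]
  have hb : Aᵀ * T * b + ϖ • (cᵀ * U * e) = 0 ↔ b = -(ϖ • ((Aᵀ * T)⁻¹ * (cᵀ * U * e))) := by
    rw [add_eq_zero_iff_eq_neg, ← Matrix.mul_smul (Aᵀ * T)⁻¹, ← Matrix.mul_neg (Aᵀ * T)⁻¹]
    refine ⟨fun hb => ?_, fun hb => ?_⟩
    · rw [← hb, nonsing_inv_mul_cancel_left _ _ hC]
    · rw [hb, mul_nonsing_inv_cancel_left _ _ hC]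
  rw [hb]
  exact and_congr_right fun hb => by rw [hquad _ hb, zero_add]

/-- An isometry of `T ⊕ ϖU` is determined by the lower left, upper left and lower right blocks. -/
noncomputable def blockIsometryEquiv (hT : T.IsSymm) (hU : U.IsSymm) (hunit : IsUnit (T.map π)) :
    FormIsometry (fromBlocks T 0 0 (ϖ • U)) (fromBlocks T 0 0 (ϖ • U)) ≃
      (Σ c : Matrix n m R, FormIsometry T (T - ϖ • (cᵀ * U * c))) ×
        {e : Matrix n n R // (e.map π)ᵀ * U.map π * e.map π = U.map π} :=
  have hblocks (M : FormIsometry (fromBlocks T 0 0 (ϖ • U)) (fromBlocks T 0 0 (ϖ • U))) :=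
    (h.transpose_fromBlocks_mul_mul_eq_iff hT hU hunit).1
      ((fromBlocks_toBlocks M.1).symm ▸ M.2)
  { toFun M := (⟨M.1.toBlocks₂₁, M.1.toBlocks₁₁, (hblocks M).1⟩, ⟨M.1.toBlocks₂₂, (hblocks M).2.2⟩)
    invFun x :=
      ⟨fromBlocks x.1.2.1 (-(ϖ • ((x.1.2.1ᵀ * T)⁻¹ * (x.1.1ᵀ * U * x.2.1)))) x.1.1 x.2.1,
        (h.transpose_fromBlocks_mul_mul_eq_iff hT hU hunit).2 ⟨x.1.2.2, rfl, x.2.2⟩⟩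
    left_inv M := Subtype.ext <| by
      dsimp only
      rw [← (hblocks M).2.1, fromBlocks_toBlocks]
    right_inv x := rfl }

theorem card_formIsometry_fromBlocks [Finite R] [Invertible (2 : k)] (hT : T.IsSymm)
    (hU : U.IsSymm) (hunit : IsUnit (T.map π)) :
    Nat.card (FormIsometry (fromBlocks T 0 0 (ϖ • U)) (fromBlocks T 0 0 (ϖ • U))) =
      Nat.card k ^ ((Fintype.card m).choose 2 + 2 * (Fintype.card n * Fintype.card m) +
          Fintype.card n * Fintype.card n) *
        Nat.card (FormIsometry (T.map π) (T.map π)) *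
          Nat.card (FormIsometry (U.map π) (U.map π)) := by
  have := Fintype.ofFinite (Matrix n m R)
  have hlift (c : Matrix n m R) : Nat.card (FormIsometry T (T - ϖ • (cᵀ * U * c))) =
      Nat.card k ^ (Fintype.card m).choose 2 * Nat.card (FormIsometry (T.map π) (T.map π)) := by
    have hsymm := hT.sub ((isSymm_transpose_mul_mul hU c).smul ϖ)
    rw [h.card_formIsometry_eq_mul hT hsymm, h.map_sub_smul_matrix]
    rwa [h.map_sub_smul_matrix]
  rw [Nat.card_congr (h.blockIsometryEquiv hT hU hunit), Nat.card_prod, Nat.card_sigma,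
    h.card_subtype_map_matrix fun e => eᵀ * U.map π * e = U.map π]
  simp only [hlift, Finset.sum_const, Finset.card_univ, smul_eq_mul, ← Nat.card_eq_fintype_card,
    h.card_matrix_eq, pow_add]
  ring

end Blocks

end IsFirstOrderThickening

theorem stmt4_general {R k : Type*} [CommRing R] [Finite R] [CommRing k] [Invertible (2 : k)]
    {π : R →+* k} {ϖ : R} (h : IsFirstOrderThickening π ϖ) (n : ℕ) :
    Nat.card (FormIsometry (diagonal fun i : Fin (n + 1) => if (i : ℕ) = n then ϖ else 1)
        (diagonal fun i : Fin (n + 1) => if (i : ℕ) = n then ϖ else 1)) =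
      Nat.card {x : k // x * x = 1} * Nat.card k ^ ((n + 1) * (n + 2) / 2) *
        Nat.card {A : Matrix (Fin n) (Fin n) k // Aᵀ * A = 1} := by
  have hone (l : Type) [DecidableEq l] : (1 : Matrix l l R).map π = 1 :=
    Matrix.map_one π (map_zero π) (map_one π)
  have hunit : IsUnit ((1 : Matrix (Fin n) (Fin n) R).map π) := by
    rw [hone]; exact isUnit_one
  rw [diagonal_ite_last_eq_submatrix, card_formIsometry_submatrix,
    h.card_formIsometry_fromBlocks isSymm_one isSymm_one hunit, hone, hone,
    card_formIsometry_one_of_unique (n := Fin 1), Fintype.card_fin, Fintype.card_fin, one_mul,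
    one_mul, choose_two_add_two_mul_add_one]
  simp only [FormIsometry, Matrix.mul_one]
  ring

/-- For an odd prime `p` dividing the odd square-free positive integer `d`, with
`S = diag(1,…,1,-d)` of size `(n+1)×(n+1)`,
`E_{p²}(S) = 2 · p^{(n+1)(n+2)/2} · |O(n, ℤ/p)|`. -/
theorem stmt4 (n p d : ℕ) (hp : p.Prime) (hpodd : Odd p) (hd : 0 < d)
    (hdodd : Odd d) (hsf : Squarefree d) (hpd : p ∣ d) :
    Nat.card {M : Matrix (Fin (n + 1)) (Fin (n + 1)) (ZMod (p ^ 2)) //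
        Mᵀ * Matrix.diagonal (fun i : Fin (n + 1) => if (i : ℕ) = n then -(d : ZMod (p ^ 2)) else 1) * M =
          Matrix.diagonal (fun i : Fin (n + 1) => if (i : ℕ) = n then -(d : ZMod (p ^ 2)) else 1)} =
      2 * p ^ ((n + 1) * (n + 2) / 2) *
        Nat.card {A : Matrix (Fin n) (Fin n) (ZMod p) // Aᵀ * A = 1} := by
  have := Fact.mk hp
  have := ((ZMod.isUnit_iff_coprime 2 p).2 (Nat.coprime_two_left.2 hpodd)).invertible
  rw [stmt4_general (.zmod_sq_neg_of_squarefree hsf hpd), card_mul_self_eq_one, Nat.card_zmod]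
end

section
/- Let p be an odd prime dividing the odd square-free positive integer d, and let S = diag(1,...,1,-d) be an (n+1)×(n+1) matrix. Then E_{p³}(S) = p^{n(n+1)/2} · E_{p²}(S), where E_q(S) is the number of matrices A over ℤ/q with Aᵀ S A = S. -/
open Matrix

/-!
Write a matrix in bordered form `[[A, b], [c, e]]`. It preserves `diag(1, …, 1, -d)` iff
`AᵀA = 1 + d c cᵀ`, `Aᵀb = d e c` and `b·b = d e² - d`. When `d` is nilpotent, `b` is determined
by `A`, `c`, `e`, and the remaining conditions are `AᵀA = 1 + d c cᵀ` and `d e² = d (1 + d c·c)`.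
If `2` is invertible, Hensel's lemma writes `1 + d c cᵀ = BᵀB` and `1 + d c·c = u²` with `B` and `u`
invertible, so each of the `|R|ⁿ` vectors `c` contributes `|Oₙ(R)| · #{x | d x² = d}` matrices.
Over `R = ℤ/pᵏ` with `p ∣ d` and `d ≠ 0` the last factor is `2 gcd(pᵏ, d)`, which is the same for
`pᵏ` and `pᵏ⁺¹`. Passing from `pᵏ` to `pᵏ⁺¹` multiplies `|R|ⁿ` by `pⁿ`, and `|Oₙ(R)|` by the number
`p ^ (n choose 2)` of skew-symmetric matrices over the kernel of the reduction map.
-/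

/-- The isometry monoid of the bilinear form with Gram matrix `S`, as a set of matrices; the number
`E_q(S)` is its cardinality over `ℤ/q`. -/
def isometries {m R : Type*} [Fintype m] [CommRing R] (S : Matrix m m R) : Set (Matrix m m R) :=
  {M | Mᵀ * S * M = S}

theorem card_isometries_submatrix_equiv {m m' R : Type*} [Fintype m] [Fintype m'] [CommRing R]
    (e : m ≃ m') (S : Matrix m' m' R) :
    Nat.card (isometries (S.submatrix e e)) = Nat.card (isometries S) := by
  refine (Nat.card_congr ((reindex e.symm e.symm).subtypeEquiv fun M => ?_)).symm
  change _ ↔ (M.submatrix e e)ᵀ * S.submatrix e e * M.submatrix e e = S.submatrix e e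
  rw [transpose_submatrix, submatrix_mul_equiv, submatrix_mul_equiv]
  exact (reindex e.symm e.symm).injective.eq_iff.symm

section SquareRoots

variable {R : Type*} [CommRing R]

theorem isUnit_one_add_mul {d : R} (hd : IsNilpotent d) (s : R) : IsUnit (1 + d * s) :=
  ((Commute.all d s).isNilpotent_mul_right hd).isUnit_one_add

/-- For such `t`, `(1 + t s)² = 1 + d s`, and `(1 + t c cᵀ)² = 1 + d c cᵀ` when `s = c·c`. -/
theorem exists_two_mul_add_mul_sq_eq {d : R} (h2 : IsUnit (2 : R)) (hd : IsNilpotent d) (s : R) :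
    ∃ t, 2 * t + s * t ^ 2 = d := by
  let P : Polynomial R := .C 2 * .X + .C s * .X ^ 2 - .C d
  have hP : IsNilpotent (Polynomial.aeval (0 : R) P) := by simpa [P] using hd
  have hP' : IsUnit (Polynomial.aeval (0 : R) P.derivative) := by
    simpa [P, Polynomial.derivative_pow] using h2
  obtain ⟨t, ⟨-, ht⟩, -⟩ := Polynomial.existsUnique_nilpotent_sub_and_aeval_eq_zero hP hP'
  exact ⟨t, by simpa [P, sub_eq_zero] using ht⟩

theorem exists_isUnit_sq_eq_one_add_mul {d : R} (h2 : IsUnit (2 : R)) (hd : IsNilpotent d) (s : R) :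
    ∃ u, IsUnit u ∧ u ^ 2 = 1 + d * s := by
  obtain ⟨t, ht⟩ := exists_two_mul_add_mul_sq_eq h2 hd s
  have hsq : (1 + t * s) ^ 2 = 1 + d * s := by linear_combination s * ht
  refine ⟨1 + t * s, (isUnit_pow_iff two_ne_zero).mp ?_, hsq⟩
  exact hsq ▸ isUnit_one_add_mul hd s

theorem card_mul_sq_eq_mul_sq (d : R) {u : R} (hu : IsUnit u) :
    Nat.card {e : R // d * e ^ 2 = d * u ^ 2} = Nat.card {x : R // d * x ^ 2 = d} := by
  refine (Nat.card_congr ((Units.mulRight hu.unit).subtypeEquiv fun x => ?_)).symm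
  change d * x ^ 2 = d ↔ d * (x * u) ^ 2 = d * u ^ 2
  rw [mul_pow, ← mul_assoc, (hu.pow 2).mul_left_inj]

theorem mul_sq_eq_self_iff [IsLocalRing R] (h2 : IsUnit (2 : R)) {d x : R} :
    d * x ^ 2 = d ↔ d * (x - 1) = 0 ∨ d * (x + 1) = 0 := by
  have hfactor : d * x ^ 2 - d = d * (x + 1) * (x - 1) := by ring
  have hfactor' : d * x ^ 2 - d = d * (x - 1) * (x + 1) := by ring
  constructor
  · intro h
    have hsum : (x + 1) + (1 - x) = 2 := by ring
    rcases IsLocalRing.isUnit_or_isUnit_of_isUnit_add (hsum ▸ h2) with hx | hx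
    · left
      rwa [← sub_eq_zero, hfactor', hx.mul_left_eq_zero] at h
    · right
      have hx' : IsUnit (x - 1) := neg_sub 1 x ▸ hx.neg
      rwa [← sub_eq_zero, hfactor, hx'.mul_left_eq_zero] at h
  · rintro (h | h)
    · rw [← sub_eq_zero, hfactor', h, zero_mul]
    · rw [← sub_eq_zero, hfactor, h, zero_mul]

theorem card_mul_sq_eq_self [IsLocalRing R] [Finite R] {d : R} (h2 : IsUnit (2 : R)) (hd : d ≠ 0) :
    Nat.card {x : R // d * x ^ 2 = d} = 2 * Nat.card {y : R // d * y = 0} := by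
  let K : Set R := {y | d * y = 0}
  have hunion : {x : R | d * x ^ 2 = d} = (1 + ·) '' K ∪ (-1 + ·) '' K := by
    ext x
    rw [Set.image_add_left, Set.image_add_left, neg_neg]
    change d * x ^ 2 = d ↔ d * (-1 + x) = 0 ∨ d * (1 + x) = 0
    rw [mul_sq_eq_self_iff h2, neg_add_eq_sub, add_comm 1 x]
  have hdisj : Disjoint ((1 + ·) '' K) ((-1 + ·) '' K) := by
    rw [Set.disjoint_left]
    rintro _ ⟨y, hy, rfl⟩ ⟨z, hz, hyz⟩
    change d * y = 0 at hy
    change d * z = 0 at hz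
    change -1 + z = 1 + y at hyz
    refine hd ((h2.mul_left_eq_zero).mp ?_)
    linear_combination hz - hy - d * hyz
  change Nat.card {x : R | d * x ^ 2 = d} = 2 * Nat.card K
  rw [Nat.card_coe_set_eq, Nat.card_coe_set_eq, hunion, Set.ncard_union_eq hdisj,
    Set.ncard_image_of_injective _ (add_right_injective _),
    Set.ncard_image_of_injective _ (add_right_injective _), two_mul]

variable {ι : Type*} [Fintype ι] [DecidableEq ι]

theorem one_add_smul_vecMulVec_mulVec_self (d : R) (c : ι → R) :
    (1 + d • vecMulVec c c) *ᵥ c = (1 + d * (c ⬝ᵥ c)) • c := by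
  rw [add_mulVec, one_mulVec, smul_mulVec, vecMulVec_mulVec, op_smul_eq_smul, smul_smul, add_smul,
    one_smul]

theorem det_one_add_smul_vecMulVec_self (d : R) (c : ι → R) :
    (1 + d • vecMulVec c c).det = 1 + d * (c ⬝ᵥ c) := by
  rw [← smul_vecMulVec, vecMulVec_eq Unit, det_one_add_replicateCol_mul_replicateRow,
    dotProduct_smul, smul_eq_mul]

theorem exists_isUnit_transpose_mul_self_eq_one_add {d : R} (h2 : IsUnit (2 : R))
    (hd : IsNilpotent d) (c : ι → R) :
    ∃ B : Matrix ι ι R, IsUnit B ∧ Bᵀ * B = 1 + d • vecMulVec c c := by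
  obtain ⟨t, ht⟩ := exists_two_mul_add_mul_sq_eq h2 hd (c ⬝ᵥ c)
  have hB : (1 + t • vecMulVec c c)ᵀ * (1 + t • vecMulVec c c) = 1 + d • vecMulVec c c := by
    rw [transpose_add, transpose_one, transpose_smul, transpose_vecMulVec, ← ht, mul_add, mul_one,
      add_mul, one_mul, smul_mul_smul_comm, vecMulVec_mul_vecMulVec, vecMulVec_smul]
    module
  have hdet : IsUnit (1 + d • vecMulVec c c).det :=
    det_one_add_smul_vecMulVec_self d c ▸ isUnit_one_add_mul hd _
  refine ⟨_, ?_, hB⟩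
  rw [← hB, det_mul] at hdet
  exact (isUnit_iff_isUnit_det _).mpr (isUnit_of_mul_isUnit_right hdet)

theorem card_transpose_mul_self_eq {B : Matrix ι ι R} (hB : IsUnit B) :
    Nat.card {A : Matrix ι ι R // Aᵀ * A = Bᵀ * B} = Nat.card (orthogonalGroup ι R) := by
  refine (Nat.card_congr ((Units.mulRight hB.unit).subtypeEquiv fun O => ?_)).symm
  have hBt : IsUnit Bᵀ := (isUnit_transpose B).mpr hB
  calc O ∈ orthogonalGroup ι R ↔ Oᵀ * O = 1 := mem_orthogonalGroup_iff' ι R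
    _ ↔ Bᵀ * (Oᵀ * O) * B = Bᵀ * 1 * B := by rw [hB.mul_left_inj, hBt.mul_right_inj]
    _ ↔ (O * B)ᵀ * (O * B) = Bᵀ * B := by
      rw [mul_one, transpose_mul, Matrix.mul_assoc, Matrix.mul_assoc, Matrix.mul_assoc]

end SquareRoots

section Bordered

variable {ι R : Type*} [CommRing R]

/-- The square matrix `[[A, b], [c, e]]`, with a last column `b` and a last row `c` added to `A`. -/
def bordered (A : Matrix ι ι R) (b c : ι → R) (e : R) : Matrix (ι ⊕ Unit) (ι ⊕ Unit) R :=
  fromBlocks A (replicateCol Unit b) (replicateRow Unit c) (e • 1)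

theorem bordered_inj {A A' : Matrix ι ι R} {b b' c c' : ι → R} {e e' : R} :
    bordered A b c e = bordered A' b' c' e' ↔ A = A' ∧ b = b' ∧ c = c' ∧ e = e' := by
  have he : e • (1 : Matrix Unit Unit R) = e' • 1 ↔ e = e' :=
    ⟨fun h => by simpa using congr_fun₂ h () (), fun h => h ▸ rfl⟩
  rw [bordered, bordered, fromBlocks_inj, replicateCol_inj, replicateRow_inj, he]

theorem exists_eq_bordered (M : Matrix (ι ⊕ Unit) (ι ⊕ Unit) R) :
    ∃ A b c e, M = bordered A b c e := by
  refine ⟨M.toBlocks₁₁, fun i => M (.inl i) (.inr ()), fun j => M (.inr ()) (.inl j),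
    M (.inr ()) (.inr ()), ?_⟩
  ext (i | i) (j | j) <;> simp [bordered, toBlocks₁₁]

/-- The Gram matrix `diag(1, …, 1, -d)`, indexed by `ι` and one further element. -/
def lorentzForm (ι : Type*) [DecidableEq ι] (d : R) : Matrix (ι ⊕ Unit) (ι ⊕ Unit) R :=
  bordered 1 0 0 (-d)

theorem lorentzForm_eq_diagonal [DecidableEq ι] (d : R) :
    lorentzForm ι d = diagonal (Sum.elim 1 fun _ => -d) := by
  rw [← fromBlocks_diagonal, lorentzForm, bordered, replicateCol_zero, replicateRow_zero,
    smul_one_eq_diagonal]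
  rfl

theorem diagonal_eq_submatrix_lorentzForm (n : ℕ) (d : R) :
    diagonal (fun i : Fin (n + 1) => if (i : ℕ) = n then -d else 1) =
      (lorentzForm (Fin n) d).submatrix
        (finSuccEquivLast.trans (Equiv.optionEquivSumPUnit (Fin n)))
        (finSuccEquivLast.trans (Equiv.optionEquivSumPUnit (Fin n))) := by
  rw [lorentzForm_eq_diagonal, submatrix_diagonal_equiv]
  congr 1
  ext i
  cases i using Fin.lastCases with
  | last => simp
  | cast i => simp [i.2.ne]

variable [Fintype ι] [DecidableEq ι]

theorem transpose_bordered_mul_lorentzForm_mul_bordered (d : R) (A : Matrix ι ι R) (b c : ι → R)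
    (e : R) :
    (bordered A b c e)ᵀ * lorentzForm ι d * bordered A b c e =
      bordered (Aᵀ * A - d • vecMulVec c c) (Aᵀ *ᵥ b - (d * e) • c) (Aᵀ *ᵥ b - (d * e) • c)
        (b ⬝ᵥ b - d * e ^ 2) := by
  have hrow : replicateRow Unit b * A = replicateRow Unit (Aᵀ *ᵥ b) := by
    rw [← replicateRow_vecMul, mulVec_transpose]
  have hdot : replicateRow Unit b * replicateCol Unit b = (b ⬝ᵥ b) • 1 := by
    rw [replicateRow_mul_replicateCol, smul_one_eq_diagonal]
    rfl
  simp only [bordered, lorentzForm, fromBlocks_transpose, fromBlocks_multiply,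
    transpose_replicateRow, transpose_replicateCol, transpose_smul, transpose_one,
    replicateCol_zero, replicateRow_zero, Matrix.mul_zero, add_zero, zero_add, Matrix.mul_one,
    Matrix.mul_smul, Matrix.smul_mul, Matrix.one_mul,
    ← replicateCol_mulVec, hrow, hdot, vecMulVec_eq Unit, sub_eq_add_neg, ← neg_smul,
    replicateCol_add, replicateRow_add, replicateCol_smul, replicateRow_smul]
  congr 1 <;> module

theorem bordered_mem_isometries_lorentzForm_iff {d : R} {A : Matrix ι ι R} {b c : ι → R} {e : R} :
    bordered A b c e ∈ isometries (lorentzForm ι d) ↔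
      Aᵀ * A = 1 + d • vecMulVec c c ∧ Aᵀ *ᵥ b = (d * e) • c ∧ b ⬝ᵥ b = d * e ^ 2 - d := by
  change _ * _ * _ = _ ↔ _
  rw [transpose_bordered_mul_lorentzForm_mul_bordered, lorentzForm, bordered_inj, and_self_left,
    sub_eq_iff_eq_add, sub_eq_zero, sub_eq_iff_eq_add, neg_add_eq_sub]

theorem transpose_mulVec_smul_mulVec {d : R} {A : Matrix ι ι R} {c : ι → R}
    (hA : Aᵀ * A = 1 + d • vecMulVec c c) (x : R) :
    Aᵀ *ᵥ (x • A *ᵥ c) = (x * (1 + d * (c ⬝ᵥ c))) • c := by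
  rw [mulVec_smul, mulVec_mulVec, hA, one_add_smul_vecMulVec_mulVec_self, smul_smul]

theorem smul_mulVec_dotProduct_smul_mulVec {d : R} {A : Matrix ι ι R} {c : ι → R}
    (hA : Aᵀ * A = 1 + d • vecMulVec c c) (x : R) :
    (x • A *ᵥ c) ⬝ᵥ (x • A *ᵥ c) = x ^ 2 * (1 + d * (c ⬝ᵥ c)) * (c ⬝ᵥ c) := by
  rw [smul_dotProduct, dotProduct_comm, dotProduct_mulVec, ← mulVec_transpose,
    transpose_mulVec_smul_mulVec hA, smul_dotProduct]
  simp only [smul_eq_mul]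
  ring

theorem bordered_mem_isometries_lorentzForm_iff_of_isNilpotent {d : R} (hd : IsNilpotent d)
    {A : Matrix ι ι R} {b c : ι → R} {e : R} :
    bordered A b c e ∈ isometries (lorentzForm ι d) ↔
      Aᵀ * A = 1 + d • vecMulVec c c ∧ d * e ^ 2 = d * (1 + d * (c ⬝ᵥ c)) ∧
        b = (d * e * Ring.inverse (1 + d * (c ⬝ᵥ c))) • A *ᵥ c := by
  rw [bordered_mem_isometries_lorentzForm_iff]
  refine and_congr_right fun hA => ?_
  set s := c ⬝ᵥ c with hs
  set v := Ring.inverse (1 + d * s)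
  have hv : (1 + d * s) * v = 1 := Ring.mul_inverse_cancel _ (isUnit_one_add_mul hd s)
  have hAt : IsUnit Aᵀ.det := by
    have := congr_arg det hA
    rw [det_mul, det_one_add_smul_vecMulVec_self] at this
    exact isUnit_of_mul_isUnit_left (this ▸ isUnit_one_add_mul hd s)
  have hb : Aᵀ *ᵥ b = (d * e) • c ↔ b = (d * e * v) • A *ᵥ c := by
    rw [← (mulVec_injective_of_isUnit ((isUnit_iff_isUnit_det _).mpr hAt)).eq_iff (a := b),
      transpose_mulVec_smul_mulVec hA, mul_assoc (d * e), mul_comm v, hv, mul_one]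
  rw [hb, and_comm]
  refine and_congr_left fun hb' => ?_
  rw [hb', smul_mulVec_dotProduct_smul_mulVec hA, ← hs]
  constructor <;> intro h
  · linear_combination -(1 + d * s) * h + d ^ 2 * e ^ 2 * s * ((1 + d * s) * v + 1) * hv
  · linear_combination
      (d * v ^ 2 * (1 + d * s) * s - 1) * h + d ^ 2 * s * ((1 + d * s) * v + 1) * hv

theorem card_isometries_lorentzForm_eq_card_sigma {d : R} (hd : IsNilpotent d) :
    Nat.card (isometries (lorentzForm ι d)) =
      Nat.card (Σ c : ι → R, {A : Matrix ι ι R // Aᵀ * A = 1 + d • vecMulVec c c} ×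
        {e : R // d * e ^ 2 = d * (1 + d * (c ⬝ᵥ c))}) := by
  symm
  refine Nat.card_eq_of_bijective (fun ⟨c, ⟨A, hA⟩, ⟨e, he⟩⟩ =>
    ⟨bordered A ((d * e * Ring.inverse (1 + d * (c ⬝ᵥ c))) • A *ᵥ c) c e,
      (bordered_mem_isometries_lorentzForm_iff_of_isNilpotent hd).mpr ⟨hA, he, rfl⟩⟩) ⟨?_, ?_⟩
  · rintro ⟨c, ⟨A, hA⟩, ⟨e, he⟩⟩ ⟨c', ⟨A', hA'⟩, ⟨e', he'⟩⟩ h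
    obtain ⟨rfl, -, rfl, rfl⟩ := bordered_inj.mp (congr_arg Subtype.val h)
    rfl
  · rintro ⟨M, hM⟩
    obtain ⟨A, b, c, e, rfl⟩ := exists_eq_bordered M
    obtain ⟨hA, he, rfl⟩ := (bordered_mem_isometries_lorentzForm_iff_of_isNilpotent hd).mp hM
    exact ⟨⟨c, ⟨A, hA⟩, ⟨e, he⟩⟩, rfl⟩

theorem card_isometries_lorentzForm [Finite R] {d : R} (h2 : IsUnit (2 : R)) (hd : IsNilpotent d) :
    Nat.card (isometries (lorentzForm ι d)) =
      Nat.card R ^ Fintype.card ι *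
        (Nat.card (orthogonalGroup ι R) * Nat.card {x : R // d * x ^ 2 = d}) := by
  have := Fintype.ofFinite R
  have hfibre : ∀ c : ι → R,
      Nat.card ({A : Matrix ι ι R // Aᵀ * A = 1 + d • vecMulVec c c} ×
        {e : R // d * e ^ 2 = d * (1 + d * (c ⬝ᵥ c))}) =
      Nat.card (orthogonalGroup ι R) * Nat.card {x : R // d * x ^ 2 = d} := fun c => by
    obtain ⟨B, hB, hBc⟩ := exists_isUnit_transpose_mul_self_eq_one_add h2 hd c
    obtain ⟨u, hu, huc⟩ := exists_isUnit_sq_eq_one_add_mul h2 hd (c ⬝ᵥ c)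
    rw [Nat.card_prod, ← hBc, card_transpose_mul_self_eq hB, ← huc, card_mul_sq_eq_mul_sq d hu]
  rw [card_isometries_lorentzForm_eq_card_sigma hd, Nat.card_sigma,
    Finset.sum_congr rfl fun c _ => hfibre c, Finset.sum_const, Finset.card_univ,
    Fintype.card_fun, smul_eq_mul, Nat.card_eq_fintype_card (α := R)]

end Bordered

section OrthogonalLifting

theorem card_skewSymmetric {ι A : Type*} [Fintype ι] [AddCommGroup A]
    (hA : ∀ a : A, a = -a → a = 0) :
    Nat.card {Z : Matrix ι ι A // Zᵀ = -Z} = Nat.card A ^ (Fintype.card ι).choose 2 := by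
  let : LinearOrder ι := .lift' (Fintype.equivFin ι) (Fintype.equivFin ι).injective
  have hpairs : Nat.card {q : ι × ι // q.1 < q.2} = (Fintype.card ι).choose 2 := by
    rw [Nat.card_eq_fintype_card, Fintype.card_subtype, Fintype.card_product_filter_lt]
  rw [← hpairs, ← Nat.card_fun]
  refine Nat.card_eq_of_bijective (fun Z q => Z.1 q.1.1 q.1.2) ⟨?_, ?_⟩
  · rintro ⟨Z, hZ⟩ ⟨W, hW⟩ hq
    have hlt : ∀ i j, i < j → Z i j = W i j := fun i j hij => congrFun hq ⟨(i, j), hij⟩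
    ext i j
    rcases lt_trichotomy i j with hij | rfl | hij
    · exact hlt i j hij
    · exact (hA _ (congr_fun₂ hZ i i)).trans (hA _ (congr_fun₂ hW i i)).symm
    · calc Z i j = -Z j i := congr_fun₂ hZ j i
        _ = -W j i := by rw [hlt j i hij]
        _ = W i j := (congr_fun₂ hW j i).symm
  · intro g
    refine ⟨⟨of fun i j => if hij : i < j then g ⟨(i, j), hij⟩ else
      if hji : j < i then -g ⟨(j, i), hji⟩ else 0, ?_⟩, ?_⟩
    · ext i j
      rcases lt_trichotomy i j with hij | rfl | hij <;> simp [*, not_lt_of_gt]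
    · ext q
      simp [q.2]

variable {ι R T : Type*} [Fintype ι] [CommRing R] [CommRing T]

theorem card_eq_card_ker_mul_card {f : R →+* T} (hf : Function.Surjective f) :
    Nat.card R = Nat.card (RingHom.ker f) * Nat.card T := by
  rw [mul_comm, ← Nat.card_congr (RingHom.quotientKerEquivOfSurjective hf).toEquiv]
  exact AddSubgroup.card_eq_card_quotient_mul_card_addSubgroup _

theorem map_transpose_mul_self (f : R →+* T) (A : Matrix ι ι R) :
    (Aᵀ * A).map f = (A.map f)ᵀ * A.map f := by
  rw [Matrix.map_mul, transpose_map]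

theorem mul_eq_zero_of_map_eq_zero {f : R →+* T} (hI : RingHom.ker f ^ 2 = ⊥) {X Y : Matrix ι ι R}
    (hX : X.map f = 0) (hY : Y.map f = 0) : X * Y = 0 := by
  ext i j
  refine Finset.sum_eq_zero fun k _ => ?_
  have hXY : X i k * Y k j ∈ RingHom.ker f ^ 2 :=
    pow_two (RingHom.ker f) ▸ Ideal.mul_mem_mul (congr_fun₂ hX i k) (congr_fun₂ hY k j)
  rwa [hI] at hXY

variable [DecidableEq ι]

/-- The entrywise reduction homomorphism `O_ι(R) → O_ι(T)` along a ring homomorphism `R → T`. -/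
def orthogonalGroupMap (ι : Type*) [Fintype ι] [DecidableEq ι] (f : R →+* T) :
    orthogonalGroup ι R →* orthogonalGroup ι T :=
  (f.mapMatrix.toMonoidHom.comp (orthogonalGroup ι R).subtype).codRestrict _ fun O => by
    have hO : (O : Matrix ι ι R)ᵀ * O = 1 := (mem_orthogonalGroup_iff' ι R).mp O.2
    refine (mem_orthogonalGroup_iff' ι T).mpr ?_
    change (O.1.map f)ᵀ * O.1.map f = 1
    rw [← map_transpose_mul_self, hO, Matrix.map_one _ f.map_zero f.map_one]

theorem orthogonalGroupMap_surjective {f : R →+* T} (h2 : IsUnit (2 : R))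
    (hf : Function.Surjective f) (hI : RingHom.ker f ^ 2 = ⊥) :
    Function.Surjective (orthogonalGroupMap ι f) := by
  rintro ⟨P, hP⟩
  rw [mem_orthogonalGroup_iff'] at hP
  obtain ⟨L, rfl⟩ : ∃ L : Matrix ι ι R, L.map f = P :=
    ⟨P.map (Function.surjInv hf), by ext; simp [Function.surjInv_eq]⟩
  obtain ⟨h, hh⟩ := h2.exists_right_inv
  obtain ⟨X, hX⟩ : ∃ X, Lᵀ * L = 1 + X := ⟨Lᵀ * L - 1, by abel⟩
  have hXT : Xᵀ = X := by
    have := congr_arg transpose hX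
    rwa [transpose_mul, transpose_transpose, hX, transpose_add, transpose_one, add_right_inj,
      eq_comm] at this
  have hX0 : X.map f = 0 := by
    have := congr_arg f.mapMatrix hX
    rw [map_add, map_one, RingHom.mapMatrix_apply, map_transpose_mul_self, hP] at this
    exact left_eq_add.mp this
  have hXX : X * X = 0 := mul_eq_zero_of_map_eq_zero hI hX0 hX0
  -- One Newton step for `OᵀO = 1` starting at `L`; it is exact because `X² = 0`.
  have hO : (L * (1 - h • X))ᵀ * (L * (1 - h • X)) = 1 := by
    calc (L * (1 - h • X))ᵀ * (L * (1 - h • X)) = (1 - h • X) * (1 + X) * (1 - h • X) := by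
          rw [transpose_mul, Matrix.mul_assoc, ← Matrix.mul_assoc Lᵀ, hX, ← Matrix.mul_assoc]
          simp [hXT]
      _ = 1 + (1 - 2 * h) • X := by
          simp only [mul_sub, sub_mul, mul_add, add_mul, mul_one, one_mul, smul_mul_assoc,
            mul_smul_comm, hXX, smul_zero, zero_mul]
          module
      _ = 1 := by rw [hh, sub_self, zero_smul, add_zero]
  refine ⟨⟨L * (1 - h • X), (mem_orthogonalGroup_iff' ι R).mpr hO⟩, Subtype.ext ?_⟩
  change f.mapMatrix (L * (1 - h • X)) = L.map f
  have hhX : f.mapMatrix (h • X) = 0 := by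
    rw [RingHom.mapMatrix_apply, Matrix.map_smul' f h X (map_mul f), hX0, smul_zero]
  rw [map_mul, map_sub, hhX, map_one, sub_zero, mul_one, RingHom.mapMatrix_apply]

theorem one_add_mem_orthogonalGroup_iff {f : R →+* T} (hI : RingHom.ker f ^ 2 = ⊥)
    {Z : Matrix ι ι R} (hZ : Z.map f = 0) : 1 + Z ∈ orthogonalGroup ι R ↔ Zᵀ = -Z := by
  have hZT : Zᵀ.map f = 0 := by rw [transpose_map, hZ, transpose_zero]
  rw [mem_orthogonalGroup_iff', transpose_add, transpose_one, add_mul, one_mul, mul_add, mul_one,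
    mul_eq_zero_of_map_eq_zero hI hZT hZ, add_zero, add_assoc, add_eq_left, add_comm,
    add_eq_zero_iff_eq_neg]

theorem mem_ker_orthogonalGroupMap_iff {f : R →+* T} {O : orthogonalGroup ι R} :
    O ∈ (orthogonalGroupMap ι f).ker ↔ ((O : Matrix ι ι R) - 1).map f = 0 := by
  rw [MonoidHom.mem_ker, Subtype.ext_iff]
  change f.mapMatrix O.1 = 1 ↔ f.mapMatrix (O.1 - 1) = 0
  rw [map_sub, map_one, sub_eq_zero]

theorem card_ker_orthogonalGroupMap {f : R →+* T} (hI : RingHom.ker f ^ 2 = ⊥) :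
    Nat.card (orthogonalGroupMap ι f).ker =
      Nat.card {Z : Matrix ι ι (RingHom.ker f) // Zᵀ = -Z} := by
  have hmap (Z : Matrix ι ι (RingHom.ker f)) : (Z.map Subtype.val).map f = 0 := by
    ext i j
    exact (Z i j).2
  have hskew (Z : Matrix ι ι (RingHom.ker f)) :
      1 + Z.map Subtype.val ∈ orthogonalGroup ι R ↔ Zᵀ = -Z := by
    rw [one_add_mem_orthogonalGroup_iff hI (hmap Z)]
    exact (Matrix.map_injective Subtype.val_injective).eq_iff (a := Zᵀ) (b := -Z)
  symm
  refine Nat.card_eq_of_bijective (fun Z => ⟨⟨1 + Z.1.map Subtype.val, (hskew Z).mpr Z.2⟩,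
    mem_ker_orthogonalGroupMap_iff.mpr ?_⟩) ⟨?_, ?_⟩
  · rw [add_sub_cancel_left, hmap]
  · intro Z W h
    have h' : 1 + Z.1.map Subtype.val = 1 + W.1.map Subtype.val :=
      congr_arg (fun O => O.1.1) h
    exact Subtype.ext (Matrix.map_injective Subtype.val_injective (add_left_cancel h'))
  · rintro ⟨⟨O, hO⟩, hOker⟩
    have hO1 := mem_ker_orthogonalGroupMap_iff.mp hOker
    let Z : Matrix ι ι (RingHom.ker f) := of fun i j => ⟨(O - 1) i j, congr_fun₂ hO1 i j⟩
    have hZ : 1 + Z.map Subtype.val = O := add_sub_cancel 1 O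
    exact ⟨⟨Z, (hskew Z).mp (hZ.symm ▸ hO)⟩, Subtype.ext (Subtype.ext hZ)⟩

theorem card_orthogonalGroup_eq {f : R →+* T}
    (h2 : IsUnit (2 : R)) (hf : Function.Surjective f) (hI : RingHom.ker f ^ 2 = ⊥) :
    Nat.card (orthogonalGroup ι R) =
      Nat.card (RingHom.ker f) ^ (Fintype.card ι).choose 2 * Nat.card (orthogonalGroup ι T) := by
  have hneg : ∀ a : RingHom.ker f, a = -a → a = 0 := fun a ha => Subtype.ext <| by
    have := congr_arg Subtype.val ha
    refine (h2.mul_right_eq_zero).mp ?_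
    simpa [two_mul, eq_neg_iff_add_eq_zero] using this
  rw [← Subgroup.card_mul_index (orthogonalGroupMap ι f).ker, Subgroup.index_ker,
    MonoidHom.range_eq_top.mpr (orthogonalGroupMap_surjective h2 hf hI), Subgroup.card_top,
    card_ker_orthogonalGroupMap hI, card_skewSymmetric hneg]

end OrthogonalLifting

section PrimePower

theorem isNilpotent_natCast_zmod_pow {p d : ℕ} (hpd : p ∣ d) (k : ℕ) :
    IsNilpotent (d : ZMod (p ^ k)) :=
  ⟨k, by rw [← Nat.cast_pow, ZMod.natCast_eq_zero_iff]; exact pow_dvd_pow_of_dvd hpd k⟩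

theorem isLocalRing_zmod_prime_pow {p k : ℕ} (hp : p.Prime) (hk : k ≠ 0) :
    IsLocalRing (ZMod (p ^ k)) := by
  have : Fact (1 < p ^ k) := ⟨Nat.one_lt_pow hk hp.one_lt⟩
  have : NeZero (p ^ k) := ⟨(pow_pos hp.pos k).ne'⟩
  refine .of_isUnit_or_isUnit_one_sub_self fun a => ?_
  obtain ⟨m, rfl⟩ := ZMod.natCast_zmod_surjective a
  by_cases hpm : p ∣ m
  · exact .inr (isNilpotent_natCast_zmod_pow hpm k).isUnit_one_sub
  · exact .inl ((ZMod.isUnit_iff_coprime _ _).mpr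
      (((Nat.Prime.coprime_iff_not_dvd hp).mpr hpm).symm.pow_right k))

theorem isUnit_two_zmod_pow {p : ℕ} (hp : Odd p) (k : ℕ) : IsUnit (2 : ZMod (p ^ k)) := by
  exact_mod_cast (ZMod.isUnit_iff_coprime 2 _).mpr ((Nat.coprime_two_left.mpr hp).pow_right k)

theorem card_natCast_mul_eq_zero (m d : ℕ) [NeZero m] :
    Nat.card {y : ZMod m // (d : ZMod m) * y = 0} = m.gcd d := by
  have := IsAddCyclic.card_nsmulAddMonoidHom_ker (ZMod m) d
  rw [Nat.card_zmod] at this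
  rw [← this]
  exact Nat.card_congr (.subtypeEquivRight fun y => by
    rw [AddMonoidHom.mem_ker, nsmulAddMonoidHom_apply, nsmul_eq_mul])

theorem gcd_prime_pow_succ {p d k : ℕ} (hp : p.Prime) (hd : ¬ p ^ k ∣ d) :
    (p ^ (k + 1)).gcd d = (p ^ k).gcd d := by
  obtain ⟨j, -, hgcd⟩ := (Nat.dvd_prime_pow hp).mp (Nat.gcd_dvd_left (p ^ (k + 1)) d)
  have hjk : j ≤ k := by
    by_contra! h
    exact hd ((pow_dvd_pow p h.le).trans (hgcd ▸ Nat.gcd_dvd_right _ d))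
  refine Nat.dvd_antisymm (Nat.dvd_gcd ?_ (Nat.gcd_dvd_right _ d)) ?_
  · exact hgcd ▸ pow_dvd_pow p hjk
  · exact Nat.gcd_dvd_gcd_of_dvd_left d (pow_dvd_pow p k.le_succ)

theorem ker_castHom_sq_eq_bot {p k : ℕ} (hk : k ≠ 0) :
    RingHom.ker (ZMod.castHom (pow_dvd_pow p k.le_succ) (ZMod (p ^ k))) ^ 2 = ⊥ := by
  rw [eq_bot_iff, pow_two, Ideal.mul_le]
  intro x hx y hy
  obtain ⟨a, rfl⟩ := ZMod.intCast_surjective x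
  obtain ⟨b, rfl⟩ := ZMod.intCast_surjective y
  rw [RingHom.mem_ker, map_intCast, ZMod.intCast_zmod_eq_zero_iff_dvd] at hx hy
  rw [Ideal.mem_bot, ← Int.cast_mul, ZMod.intCast_zmod_eq_zero_iff_dvd]
  refine dvd_trans ?_ (mul_dvd_mul hx hy)
  rw [← Nat.cast_mul, ← pow_add]
  exact_mod_cast pow_dvd_pow p (by lia : k + 1 ≤ k + k)

theorem card_orthogonalGroup_zmod_prime_pow_succ {ι : Type*} [Fintype ι] [DecidableEq ι] {p k : ℕ}
    (hp : Odd p) (hk : k ≠ 0) :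
    Nat.card (orthogonalGroup ι (ZMod (p ^ (k + 1)))) =
      p ^ (Fintype.card ι).choose 2 * Nat.card (orthogonalGroup ι (ZMod (p ^ k))) := by
  have hsurj := ZMod.castHom_surjective (pow_dvd_pow p k.le_succ)
  have hker : Nat.card (RingHom.ker (ZMod.castHom (pow_dvd_pow p k.le_succ) (ZMod (p ^ k)))) =
      p := by
    have hcard := card_eq_card_ker_mul_card hsurj
    rw [Nat.card_zmod, Nat.card_zmod] at hcard
    exact (Nat.eq_of_mul_eq_mul_right (pow_pos hp.pos k) (pow_succ' p k ▸ hcard)).symm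
  rw [card_orthogonalGroup_eq (isUnit_two_zmod_pow hp _) hsurj (ker_castHom_sq_eq_bot hk), hker]

theorem card_isometries_diagonal_zmod_prime_pow (n : ℕ) {p d k : ℕ} (hp : p.Prime) (hodd : Odd p)
    (hpd : p ∣ d) (hd : ¬ p ^ k ∣ d) :
    Nat.card (isometries
        (diagonal fun i : Fin (n + 1) => if (i : ℕ) = n then -(d : ZMod (p ^ k)) else 1)) =
      (p ^ k) ^ n * (Nat.card (orthogonalGroup (Fin n) (ZMod (p ^ k))) * (2 * (p ^ k).gcd d)) := by
  have : NeZero (p ^ k) := ⟨(pow_pos hp.pos k).ne'⟩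
  have hk : k ≠ 0 := by
    rintro rfl
    exact hd (one_dvd d)
  have := isLocalRing_zmod_prime_pow hp hk
  have h2 := isUnit_two_zmod_pow hodd k
  have hd0 : (d : ZMod (p ^ k)) ≠ 0 := fun h => hd ((ZMod.natCast_eq_zero_iff d _).mp h)
  rw [diagonal_eq_submatrix_lorentzForm, card_isometries_submatrix_equiv,
    card_isometries_lorentzForm h2 (isNilpotent_natCast_zmod_pow hpd k), card_mul_sq_eq_self h2 hd0,
    card_natCast_mul_eq_zero, Nat.card_zmod, Fintype.card_fin]

end PrimePower

theorem stmt5_general (n : ℕ) {p d k : ℕ} (hp : p.Prime) (hodd : Odd p) (hpd : p ∣ d)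
    (hd : ¬ p ^ k ∣ d) :
    Nat.card (isometries
        (diagonal fun i : Fin (n + 1) => if (i : ℕ) = n then -(d : ZMod (p ^ (k + 1))) else 1)) =
      p ^ (n * (n + 1) / 2) * Nat.card (isometries
        (diagonal fun i : Fin (n + 1) => if (i : ℕ) = n then -(d : ZMod (p ^ k)) else 1)) := by
  have hk : k ≠ 0 := by
    rintro rfl
    exact hd (one_dvd d)
  have hd' : ¬ p ^ (k + 1) ∣ d := fun h => hd ((pow_dvd_pow p k.le_succ).trans h)
  have hexp : n * (n + 1) / 2 = n + n.choose 2 := by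
    rw [Nat.choose_two_right, add_comm n (_ / 2), ← Nat.triangle_succ, Nat.add_sub_cancel, mul_comm]
  rw [card_isometries_diagonal_zmod_prime_pow n hp hodd hpd hd',
    card_isometries_diagonal_zmod_prime_pow n hp hodd hpd hd, gcd_prime_pow_succ hp hd,
    card_orthogonalGroup_zmod_prime_pow_succ hodd hk, Fintype.card_fin, hexp]
  ring

/-- For an odd prime `p` dividing the odd square-free positive integer `d`, with
`S = diag(1,…,1,-d)` of size `(n+1)×(n+1)`, `E_{p³}(S) = p^{n(n+1)/2} · E_{p²}(S)`. -/
theorem stmt5 (n p d : ℕ) (hp : p.Prime) (hpodd : Odd p) (hd : 0 < d)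
    (hdodd : Odd d) (hsf : Squarefree d) (hpd : p ∣ d) :
    Nat.card {M : Matrix (Fin (n + 1)) (Fin (n + 1)) (ZMod (p ^ 3)) //
        Mᵀ * Matrix.diagonal (fun i : Fin (n + 1) => if (i : ℕ) = n then -(d : ZMod (p ^ 3)) else 1) * M =
          Matrix.diagonal (fun i : Fin (n + 1) => if (i : ℕ) = n then -(d : ZMod (p ^ 3)) else 1)} =
      p ^ (n * (n + 1) / 2) *
        Nat.card {M : Matrix (Fin (n + 1)) (Fin (n + 1)) (ZMod (p ^ 2)) //
          Mᵀ * Matrix.diagonal (fun i : Fin (n + 1) => if (i : ℕ) = n then -(d : ZMod (p ^ 2)) else 1) * M =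
            Matrix.diagonal (fun i : Fin (n + 1) => if (i : ℕ) = n then -(d : ZMod (p ^ 2)) else 1)} :=
  stmt5_general n (k := 2) hp hpodd hpd fun h => hp.not_isUnit (hsf p (pow_two p ▸ h))
end
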